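/- Let φ : ℝ/ℤ → ℝ be a bounded Borel (real-valued) function and let J be a nonempty finite subset of ℤ. Then T_J(φ)² ≤ T_J(φ²) in the Loewner order, i.e. the matrix T_J(φ²) − T_J(φ)·T_J(φ) is positive semidefinite. -/

import Mathlib

open MeasureTheory Matrix
open scoped ComplexOrder

/-- The `n`-th Fourier coefficient of a function on the circle `ℝ/ℤ`. -/
noncomputable def fhat (φ : AddCircle (1:ℝ) → ℝ) (n : ℤ) : ℂ :=
  fourierCoeff (fun t => (φ t : ℂ)) n

/-- The matrix `T_J(φ) = (φ̂(i-j))_{i,j ∈ J}` indexed by a finite subset `J ⊂ ℤ`. -/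
noncomputable def TJ (φ : AddCircle (1:ℝ) → ℝ) (J : Finset ℤ) : Matrix J J ℂ :=
  Matrix.of fun i j => fhat φ ((i : ℤ) - (j : ℤ))

lemma aux_gram {H : Type*} [NormedAddCommGroup H] [InnerProductSpace ℂ H] {ι : Type*} [Fintype ι]
    [DecidableEq ι] (e v : ι → H) (he : Orthonormal ℂ e) (M : Matrix ι ι ℂ)
    (hM : ∀ i j, M i j = inner ℂ (v i) (v j) - ∑ k, inner ℂ (v i) (e k) * inner ℂ (e k) (v j)) :
    M.PosSemidef := by
  have : M = Matrix.gram ℂ (fun i => v i - ∑ k, (inner ℂ (e k) (v i) : ℂ) • e k) := by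
    ext i j
    rw [hM, Matrix.gram_apply]
    simp only [inner_sub_left, inner_sub_right, sum_inner, inner_sum, inner_smul_left,
      inner_smul_right, inner_conj_symm, orthonormal_iff_ite.mp he]
    simp [mul_comm]
  rw [this]
  exact Matrix.posSemidef_gram ..

lemma aux_memLp (φ : AddCircle (1:ℝ) → ℝ) (hmeas : Measurable φ) (C : ℝ) (hbd : ∀ t, |φ t| ≤ C)
    (n : ℤ) : MemLp (fun t => (φ t : ℂ) * fourier n t) 2 (AddCircle.haarAddCircle (T := 1)) := by
  refine MemLp.of_bound ?_ C ?_
  · exact ((Complex.measurable_ofReal.comp hmeas).mul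
      (fourier n).continuous.measurable).aestronglyMeasurable
  · refine Filter.Eventually.of_forall fun t => ?_
    have : ‖(fourier n : C(AddCircle (1:ℝ), ℂ)) t‖ = 1 := by
      rw [fourier_apply]; exact Circle.norm_coe _
    rw [norm_mul, this, mul_one, Complex.norm_real]
    exact hbd t

/-- For a bounded real Borel function `φ` and a nonempty finite `J ⊂ ℤ`,
`T_J(φ)² ≤ T_J(φ²)` in the Loewner order. -/
theorem TJ_sq_le_TJ_sq
    (φ : AddCircle (1:ℝ) → ℝ) (hmeas : Measurable φ) (C : ℝ) (hbd : ∀ t, |φ t| ≤ C)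
    (J : Finset ℤ) (hJ : J.Nonempty) :
    (TJ (fun t => (φ t) ^ 2) J - TJ φ J * TJ φ J).PosSemidef := by
  classical
  set v : J → Lp ℂ 2 (AddCircle.haarAddCircle (T := 1)) :=
    fun j => (aux_memLp φ hmeas C hbd j).toLp _ with hv
  set e : J → Lp ℂ 2 (AddCircle.haarAddCircle (T := 1)) := fun j => fourierLp 2 (j : ℤ) with he
  have hev : ∀ i j, inner ℂ (e i) (v j) = TJ φ J i j := by
    intro i j
    rw [L2.inner_def]
    simp only [TJ, fhat, fourierCoeff, Matrix.of_apply]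
    refine integral_congr_ae ?_
    filter_upwards [coeFn_fourierLp (T := 1) 2 (i : ℤ),
      (aux_memLp φ hmeas C hbd j).coeFn_toLp] with t h1 h2
    simp only [he, hv, h1, h2, RCLike.inner_apply]
    rw [neg_sub, sub_eq_add_neg, fourier_add, fourier_neg, smul_eq_mul]
    ring
  have hvv : ∀ i j, inner ℂ (v i) (v j) = TJ (fun t => (φ t) ^ 2) J i j := by
    intro i j
    rw [L2.inner_def]
    simp only [TJ, fhat, fourierCoeff, Matrix.of_apply]
    refine integral_congr_ae ?_
    filter_upwards [(aux_memLp φ hmeas C hbd i).coeFn_toLp,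
      (aux_memLp φ hmeas C hbd j).coeFn_toLp] with t h1 h2
    simp only [hv, h1, h2, RCLike.inner_apply]
    rw [neg_sub, sub_eq_add_neg, fourier_add, fourier_neg, smul_eq_mul, map_mul,
      Complex.conj_ofReal]
    push_cast
    ring
  have hve : ∀ i j, inner ℂ (v i) (e j) = TJ φ J i j := by
    intro i j
    rw [L2.inner_def]
    simp only [TJ, fhat, fourierCoeff, Matrix.of_apply]
    refine integral_congr_ae ?_
    filter_upwards [coeFn_fourierLp (T := 1) 2 (j : ℤ),
      (aux_memLp φ hmeas C hbd i).coeFn_toLp] with t h1 h2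
    simp only [he, hv, h1, h2, RCLike.inner_apply]
    rw [neg_sub, sub_eq_add_neg, fourier_add, fourier_neg, smul_eq_mul, map_mul,
      Complex.conj_ofReal]
    ring
  refine aux_gram e v (orthonormal_fourier.comp _ Subtype.val_injective) _ fun i j => ?_
  simp only [hvv, hve, hev, Matrix.sub_apply, Matrix.mul_apply]
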